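/- Let d ≥ 3 and let N₀ > (d+2)/(d−2) be an odd integer. Let Ω ⊂ ℝ^d be a star-shaped domain containing the origin with C¹ boundary. Suppose u ∈ C²(closure of Ω) is a classical solution of −Δu = ∑_{N ≥ N₀, N odd} u^N / N! in Ω with u = 0 on ∂Ω. Then u ≡ 0 on the closure of Ω. -/

import Mathlib

open MeasureTheory Set Filter
open scoped ENNReal NNReal Topology BigOperators

noncomputable section

/-- Euclidean space ℝ^d. -/
abbrev Euc (d : ℕ) := EuclideanSpace ℝ (Fin d)

/-- Smooth compactly supported test functions supported inside Ω. -/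
def IsTestFun {d : ℕ} (Ω : Set (Euc d)) (φ : Euc d → ℂ) : Prop :=
  ContDiff ℝ (⊤ : ℕ∞) φ ∧ HasCompactSupport φ ∧ tsupport φ ⊆ Ω

/-- The i-th partial derivative of a (differentiable) function. -/
def pd {d : ℕ} (i : Fin d) (φ : Euc d → ℂ) (x : Euc d) : ℂ :=
  fderiv ℝ φ x (EuclideanSpace.single i (1 : ℝ))

/-- `v` is the i-th weak partial derivative of `u` on Ω. -/
def IsWeakDeriv {d : ℕ} (Ω : Set (Euc d)) (i : Fin d) (u v : Euc d → ℂ) : Prop :=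
  ∀ φ : Euc d → ℂ, IsTestFun Ω φ →
    ∫ x in Ω, u x * pd i φ x = - ∫ x in Ω, v x * φ x

/-- Membership in L²(Ω). -/
def MemL2 {d : ℕ} (Ω : Set (Euc d)) (u : Euc d → ℂ) : Prop :=
  MemLp u 2 (volume.restrict Ω)

/-- The L²(Ω) norm. -/
def L2N {d : ℕ} (Ω : Set (Euc d)) (u : Euc d → ℂ) : ℝ :=
  (eLpNorm u 2 (volume.restrict Ω)).toReal

/-- The L^∞(Ω) norm. -/
def LinfN {d : ℕ} (Ω : Set (Euc d)) (u : Euc d → ℂ) : ℝ :=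
  (eLpNorm u ⊤ (volume.restrict Ω)).toReal

/-- A bundled Sobolev function of integer order k on Ω : the function together with
all of its iterated weak partial derivatives up to order k, all belonging to L²(Ω).
`D j v` is the iterated weak derivative ∂_{v 0} ∂_{v 1} ⋯ ∂_{v (j-1)} u. -/
structure SobFun (d : ℕ) (Ω : Set (Euc d)) (k : ℕ) where
  D : (j : ℕ) → (Fin j → Fin d) → Euc d → ℂ
  mem : ∀ j, j ≤ k → ∀ v : Fin j → Fin d, MemL2 Ω (D j v)
  weak : ∀ j, j < k → ∀ v : Fin j → Fin d, ∀ i : Fin d,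
    IsWeakDeriv Ω i (D j v) (D (j+1) (Fin.cons i v))

/-- The underlying function of a bundled Sobolev function. -/
def SobFun.u {d : ℕ} {Ω : Set (Euc d)} {k : ℕ} (U : SobFun d Ω k) : Euc d → ℂ :=
  U.D 0 (fun i => i.elim0)

/-- First-order weak partial derivatives of a bundled Sobolev function. -/
def SobFun.d1 {d : ℕ} {Ω : Set (Euc d)} {k : ℕ} (U : SobFun d Ω k) (i : Fin d) :
    Euc d → ℂ :=
  U.D 1 (fun _ => i)

/-- Forgetting the top-order derivatives of a bundled Sobolev function. -/
def SobFun.lower {d : ℕ} {Ω : Set (Euc d)} {k : ℕ} (U : SobFun d Ω (k+1)) :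
    SobFun d Ω k :=
  ⟨U.D, fun j hj v => U.mem j (Nat.le_succ_of_le hj) v,
    fun j hj v i => U.weak j (Nat.lt_succ_of_lt hj) v i⟩

/-- Squared Gagliardo seminorm, as an extended nonnegative real. -/
def gagliardoE {d : ℕ} (Ω : Set (Euc d)) (s' : ℝ) (v : Euc d → ℂ) : ℝ≥0∞ :=
  ∫⁻ x in Ω, ∫⁻ y in Ω,
    ((‖v x - v y‖₊ : ℝ≥0∞) ^ (2 : ℕ)) / ((‖x - y‖₊ : ℝ≥0∞) ^ ((d : ℝ) + 2 * s'))

/-- Gagliardo seminorm with differentiability parameter s' ∈ (0,1). -/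
def gagliardo {d : ℕ} (Ω : Set (Euc d)) (s' : ℝ) (v : Euc d → ℂ) : ℝ :=
  ((gagliardoE Ω s' v) ^ ((1 : ℝ)/2)).toReal

/-- Integer-order Sobolev norm ‖·‖_{H^k(Ω)}. -/
def SobNormInt {d : ℕ} {Ω : Set (Euc d)} {k : ℕ} (U : SobFun d Ω k) : ℝ :=
  Real.sqrt (∑ j ∈ Finset.range (k+1), ∑ v : Fin j → Fin d, (L2N Ω (U.D j v))^2)

/-- Sobolev norm ‖·‖_{H^s(Ω)} for k ≤ s < k+1 : the integer part plus, when s > k,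
the Gagliardo seminorms of the top-order derivatives. -/
def SobNormS {d : ℕ} {Ω : Set (Euc d)} {k : ℕ} (s : ℝ) (U : SobFun d Ω k) : ℝ :=
  Real.sqrt ((∑ j ∈ Finset.range (k+1), ∑ v : Fin j → Fin d, (L2N Ω (U.D j v))^2)
    + if (k : ℝ) < s then
        ∑ v : Fin k → Fin d, (gagliardo Ω (s - k) (U.D k v))^2
      else 0)

/-- Finiteness of the fractional part of the H^s norm (membership in H^s). -/
def SobFinS {d : ℕ} {Ω : Set (Euc d)} {k : ℕ} (s : ℝ) (U : SobFun d Ω k) : Prop :=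
  (k : ℝ) < s → ∀ v : Fin k → Fin d, gagliardoE Ω (s - k) (U.D k v) < ⊤

/-- H^s distance between two bundled Sobolev functions, k ≤ s < k+1. -/
def SobDistS {d : ℕ} {Ω : Set (Euc d)} {k : ℕ} (s : ℝ) (U V : SobFun d Ω k) : ℝ :=
  Real.sqrt ((∑ j ∈ Finset.range (k+1), ∑ v : Fin j → Fin d,
      (L2N Ω (fun x => U.D j v x - V.D j v x))^2)
    + if (k : ℝ) < s then
        ∑ v : Fin k → Fin d, (gagliardo Ω (s - k) (fun x => U.D k v x - V.D k v x))^2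
      else 0)

/-- Membership in H¹₀(Ω) : the extension by zero belongs to H¹(ℝ^d). -/
def MemH10 {d : ℕ} (Ω : Set (Euc d)) (u : Euc d → ℂ) : Prop :=
  MemL2 univ (Ω.indicator u) ∧
  ∀ i : Fin d, ∃ v : Euc d → ℂ, MemL2 univ v ∧ IsWeakDeriv univ i (Ω.indicator u) v

/-- The principal Dirichlet eigenvalue of -Δ on Ω, via the Rayleigh variational
characterization (infimum over smooth compactly supported test functions). -/
def lambda1 {d : ℕ} (Ω : Set (Euc d)) : ℝ :=
  sInf { r : ℝ | ∃ φ : Euc d → ℂ, IsTestFun Ω φ ∧ φ ≠ 0 ∧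
    r = (∫ x, ‖fderiv ℝ φ x‖^2) / (∫ x, ‖φ x‖^2) }

/-- Ω has a smooth boundary: it is a sublevel set of a smooth function whose
gradient does not vanish on the boundary. -/
def HasSmoothBoundary {d : ℕ} (Ω : Set (Euc d)) : Prop :=
  ∃ f : Euc d → ℝ, ContDiff ℝ (⊤ : ℕ∞) f ∧ Ω = {x | f x < 0} ∧
    ∀ x ∈ frontier Ω, fderiv ℝ f x ≠ 0

/-- Uniform ellipticity: Re ∑ ε^{ij}(x) ξ_i conj(ξ_j) ≥ θ |ξ|² for a.e. x ∈ Ω. -/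
def UniformlyElliptic {d : ℕ} (Ω : Set (Euc d))
    (ε : Euc d → Matrix (Fin d) (Fin d) ℂ) (θ : ℝ) : Prop :=
  ∀ᵐ x ∂(volume.restrict Ω), ∀ ξ : Fin d → ℂ,
    θ * ∑ i, ‖ξ i‖^2 ≤ (∑ i, ∑ j, ε x i j * ξ i * (starRingEnd ℂ) (ξ j)).re

/-- ε ∈ W^{1,∞}(Ω; ℂ^{d×d}) : every entry is bounded and Lipschitz on Ω. -/
def EpsW1inf {d : ℕ} (Ω : Set (Euc d)) (ε : Euc d → Matrix (Fin d) (Fin d) ℂ) : Prop :=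
  ∃ K : ℝ≥0, ∀ i j, LipschitzOnWith K (fun x => ε x i j) Ω ∧ ∀ x ∈ Ω, ‖ε x i j‖ ≤ (K : ℝ)

/-- `Lu` is a representative of  L u = -∇·(ε ∇u) + κ² u  for the H²-function U:
there are weak divergence data g i = ∂_i (∑_j ε^{ij} ∂_j u)  with
Lu = -∑ g i + κ² u  a.e. on Ω. -/
def IsLu {d : ℕ} (Ω : Set (Euc d)) (ε : Euc d → Matrix (Fin d) (Fin d) ℂ)
    (κ2 : Euc d → ℂ) (U : SobFun d Ω 2) (Lu : Euc d → ℂ) : Prop :=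
  ∃ g : Fin d → Euc d → ℂ,
    (∀ i, IsWeakDeriv Ω i (fun x => ∑ j, ε x i j * U.d1 j x) (g i)) ∧
    ∀ᵐ x ∂(volume.restrict Ω), Lu x = -(∑ i, g i x) + κ2 x * U.u x

/-- U ∈ H²(Ω) is a strong solution of the nPBE
  -∇·(ε ∇u) + κ² sinh u = f in Ω,  u = g on ∂Ω,
where the boundary datum is represented by a lift w (u - w ∈ H¹₀(Ω)). -/
def IsStrongSolNPBE {d : ℕ} (Ω : Set (Euc d)) (ε : Euc d → Matrix (Fin d) (Fin d) ℂ)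
    (κ2 : Euc d → ℂ) (f w : Euc d → ℂ) (U : SobFun d Ω 2) : Prop :=
  (∃ g : Fin d → Euc d → ℂ,
    (∀ i, IsWeakDeriv Ω i (fun x => ∑ j, ε x i j * U.d1 j x) (g i)) ∧
    ∀ᵐ x ∂(volume.restrict Ω),
      -(∑ i, g i x) + κ2 x * Complex.sinh (U.u x) = f x) ∧
  MemH10 Ω (fun x => U.u x - w x)

/-- U ∈ H¹(Ω) is a weak solution of the linear PBE L u = f with boundary lift w. -/
def IsWeakSolLinPBE {d : ℕ} (Ω : Set (Euc d)) (ε : Euc d → Matrix (Fin d) (Fin d) ℂ)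
    (κ2 : Euc d → ℂ) (f w : Euc d → ℂ) (U : SobFun d Ω 1) : Prop :=
  MemH10 Ω (fun x => U.u x - w x) ∧
  ∀ Φ : SobFun d Ω 1, MemH10 Ω Φ.u →
    (∫ x in Ω, ((∑ i, ∑ j, ε x i j * U.d1 j x * (starRingEnd ℂ) (Φ.d1 i x))
        + κ2 x * U.u x * (starRingEnd ℂ) (Φ.u x)))
      = ∫ x in Ω, f x * (starRingEnd ℂ) (Φ.u x)

/-- Taylor coefficients n_k of sinh z - z : 1/k! for odd k, 0 for even k. -/
def nk (k : ℕ) : ℝ := if Odd k then 1 / (Nat.factorial k) else 0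

/-- Ω has a C¹ boundary: it is a sublevel set of a C¹ function whose gradient does not
vanish on the boundary. -/
def HasC1Boundary {d : ℕ} (Ω : Set (Euc d)) : Prop :=
  ∃ f : Euc d → ℝ, ContDiff ℝ 1 f ∧ Ω = {x | f x < 0} ∧
    ∀ x ∈ frontier Ω, fderiv ℝ f x ≠ 0

/-!
The dilations `u ↦ t ^ ((d - 2) / 2) • u (t • ·)` leave the Dirichlet energy invariant. If
`-Δ u = g (u)` and `G' = g`, the associated Noether current has divergence
`h (u) = d * G (u) - (d - 2) / 2 * u * g (u)`, and where `u = 0` its outward flux is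
`‖∇ u‖² ⟪x, ν⟫ / 2`, which is nonnegative on the boundary of a domain that is star-shaped about `0`.
Hence `0 ≤ ∫ h (u)`, whereas supercriticality of `g` means `h s < 0` for `s ≠ 0`; so `u = 0`.

Only this inequality is needed, not the value of the flux, so no surface measure enters: it follows
by testing the divergence against cutoffs that are functions of the defining function of the domain.
-/

section

open Module Bornology InnerProductSpace
open scoped Laplacian ContDiff Gradient

/-! ## Divergence -/

section Divergence

variable {E : Type*} [NormedAddCommGroup E] [NormedSpace ℝ E]

/-- The divergence of a vector field: the trace of its derivative. It takes a junk value where the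
field is not differentiable. -/
def divergence (W : E → E) (x : E) : ℝ := LinearMap.trace ℝ E (fderiv ℝ W x)

lemma divergence_congr {V W : E → E} {x : E} (h : V =ᶠ[𝓝 x] W) :
    divergence V x = divergence W x := by
  rw [divergence, divergence, h.fderiv_eq]

lemma divergence_add {V W : E → E} {x : E} (hV : DifferentiableAt ℝ V x)
    (hW : DifferentiableAt ℝ W x) : divergence (V + W) x = divergence V x + divergence W x := by
  rw [divergence, fderiv_add hV hW, ContinuousLinearMap.toLinearMap_add, map_add]; rfl

lemma divergence_const_smul {W : E → E} {x : E} (c : ℝ) (hW : DifferentiableAt ℝ W x) :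
    divergence (c • W) x = c * divergence W x := by
  rw [divergence, fderiv_const_smul hW, ContinuousLinearMap.toLinearMap_smul, map_smul,
    smul_eq_mul, divergence]

lemma contDiff_smul_of_tsupport_subset {F : Type*} [NormedAddCommGroup F] [NormedSpace ℝ F]
    {n : ℕ∞} {Ω : Set E} (hΩ : IsOpen Ω) {φ : E → ℝ} (hφ : ContDiff ℝ n φ) (hφΩ : tsupport φ ⊆ Ω)
    {W : E → F} (hW : ContDiffOn ℝ n W Ω) : ContDiff ℝ n (φ • W) := by
  refine ContMDiff.contDiff (contMDiff_of_tsupport fun x hx ↦ ContDiffAt.contMDiffAt ?_)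
  have hxΩ : x ∈ Ω := hφΩ (tsupport_smul_subset_left φ W hx)
  exact hφ.contDiffAt.smul (hW.contDiffAt (hΩ.mem_nhds hxΩ))

variable [FiniteDimensional ℝ E]

lemma divergence_id (x : E) : divergence id x = finrank ℝ E := by
  rw [divergence, fderiv_id, ContinuousLinearMap.coe_id, LinearMap.trace_id]

lemma divergence_smul {φ : E → ℝ} {W : E → E} {x : E} (hφ : DifferentiableAt ℝ φ x)
    (hW : DifferentiableAt ℝ W x) :
    divergence (φ • W) x = φ x * divergence W x + fderiv ℝ φ x (W x) := by
  have trace_smulRight : LinearMap.trace ℝ E ((fderiv ℝ φ x).smulRight (W x)) =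
      fderiv ℝ φ x (W x) := LinearMap.trace_smulRight _ _
  rw [divergence, fderiv_smul hφ hW, ContinuousLinearMap.toLinearMap_add, map_add,
    ContinuousLinearMap.toLinearMap_smul, map_smul, trace_smulRight, smul_eq_mul, divergence]

/-- The trace as a continuous linear functional on `E →L[ℝ] E`, used to pass limits and integrals
through `divergence`. -/
def traceCLM (E : Type*) [NormedAddCommGroup E] [NormedSpace ℝ E] [FiniteDimensional ℝ E] :
    (E →L[ℝ] E) →L[ℝ] ℝ :=
  (LinearMap.trace ℝ E ∘ₗ ContinuousLinearMap.coeLM ℝ).toContinuousLinearMap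

lemma continuous_divergence {W : E → E} (hW : ContDiff ℝ 1 W) :
    Continuous (divergence W) :=
  (traceCLM E).continuous.comp (hW.continuous_fderiv one_ne_zero)

variable [MeasurableSpace E] [BorelSpace E] {μ : Measure E} [μ.IsAddHaarMeasure]

lemma integral_fderiv_eq_zero {F : Type*} [NormedAddCommGroup F] [NormedSpace ℝ F]
    {W : E → F} (hW : ContDiff ℝ 1 W) (hc : HasCompactSupport W) :
    ∫ x, fderiv ℝ W x ∂μ = 0 := by
  have integrable_fderiv : Integrable (fderiv ℝ W) μ :=
    (hW.continuous_fderiv one_ne_zero).integrable_of_hasCompactSupport (hc.fderiv (𝕜 := ℝ))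
  ext v
  rw [ContinuousLinearMap.integral_apply integrable_fderiv]
  have by_parts := integral_smul_fderiv_eq_neg_fderiv_smul_of_integrable (μ := μ)
    (f := fun _ : E ↦ (1 : ℝ)) (g := W) (v := v) (by simp)
    (by simpa using integrable_fderiv.apply_continuousLinearMap v)
    (by simpa using hW.continuous.integrable_of_hasCompactSupport hc)
    (by fun_prop) (fun x _ ↦ hW.differentiable one_ne_zero x)
  simpa using by_parts

theorem integral_divergence_eq_zero {W : E → E} (hW : ContDiff ℝ 1 W)
    (hc : HasCompactSupport W) : ∫ x, divergence W x ∂μ = 0 := by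
  have integrable_fderiv : Integrable (fderiv ℝ W) μ :=
    (hW.continuous_fderiv one_ne_zero).integrable_of_hasCompactSupport (hc.fderiv (𝕜 := ℝ))
  calc ∫ x, divergence W x ∂μ = traceCLM E (∫ x, fderiv ℝ W x ∂μ) :=
        (traceCLM E).integral_comp_comm integrable_fderiv
    _ = 0 := by rw [integral_fderiv_eq_zero hW hc, map_zero]

lemma setIntegral_mul_divergence {Ω : Set E} (hΩ : IsOpen Ω) (hΩb : IsBounded Ω) {φ : E → ℝ}
    (hφ : ContDiff ℝ 1 φ) (hφΩ : tsupport φ ⊆ Ω) {W : E → E} (hW : ContDiffOn ℝ 1 W Ω)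
    (hint : IntegrableOn (fun x ↦ φ x * divergence W x) Ω μ) :
    ∫ x in Ω, φ x * divergence W x ∂μ = -∫ x in Ω, fderiv ℝ φ x (W x) ∂μ := by
  have hφW : ContDiff ℝ 1 (φ • W) := contDiff_smul_of_tsupport_subset hΩ hφ hφΩ hW
  have tsupport_φW : tsupport (φ • W) ⊆ Ω := (tsupport_smul_subset_left φ W).trans hφΩ
  have hφc : HasCompactSupport φ :=
    hΩb.isCompact_closure.of_isClosed_subset (isClosed_tsupport φ) (hφΩ.trans subset_closure)
  have divergence_φW : EqOn (divergence (φ • W))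
      (fun x ↦ φ x * divergence W x + fderiv ℝ φ x (W x)) Ω := fun x hx ↦
    divergence_smul (hφ.differentiable one_ne_zero x)
      ((hW.contDiffAt (hΩ.mem_nhds hx)).differentiableAt one_ne_zero)
  have integral_φW : ∫ x in Ω, divergence (φ • W) x ∂μ = 0 := by
    rw [setIntegral_eq_integral_of_forall_compl_eq_zero,
      integral_divergence_eq_zero hφW hφc.smul_right]
    intro x hx
    rw [divergence, image_eq_zero_of_notMem_tsupport fun h ↦
      hx (tsupport_φW (tsupport_fderiv_subset ℝ h)), ContinuousLinearMap.toLinearMap_zero, map_zero]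
  have integrable_φW : IntegrableOn (divergence (φ • W)) Ω μ :=
    (((continuous_divergence hφW).continuousOn.integrableOn_compact
      hΩb.isCompact_closure).mono_set subset_closure)
  have integrable_flux : IntegrableOn (fun x ↦ fderiv ℝ φ x (W x)) Ω μ :=
    (integrable_φW.sub hint).congr_fun (fun x hx ↦ by simp [divergence_φW hx]) hΩ.measurableSet
  rw [eq_neg_iff_add_eq_zero, ← integral_add hint integrable_flux, ← integral_φW]
  exact (setIntegral_congr_fun hΩ.measurableSet divergence_φW).symm

end Divergence

/-! ## Domains with C¹ boundary -/

lemma eventually_lt_of_fderiv_neg {E : Type*} [NormedAddCommGroup E] [NormedSpace ℝ E]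
    {f : E → ℝ} {f' : E →L[ℝ] ℝ} {x v : E} (hf : HasFDerivAt f f' x) (hv : f' v < 0) :
    ∀ᶠ t : ℝ in 𝓝[>] 0, f (x + t • v) < f x := by
  have slope_tendsto := hasDerivAt_iff_tendsto_slope.1 (hf.hasLineDerivAt v)
  have slope_neg := (slope_tendsto.mono_left (nhdsGT_le_nhdsNE 0)).eventually_lt_const hv
  filter_upwards [slope_neg, self_mem_nhdsWithin] with t ht (ht0 : 0 < t)
  rw [slope_def_field, sub_zero, div_lt_iff₀ ht0, zero_mul, zero_smul, add_zero] at ht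
  exact sub_neg.1 ht

lemma surjective_of_ne_zero {E : Type*} [AddCommGroup E] [Module ℝ E] [TopologicalSpace E]
    {L : E →L[ℝ] ℝ} (hL : L ≠ 0) : Function.Surjective L :=
  LinearMap.surjective (f := L.toLinearMap) (by exact_mod_cast hL)

lemma exists_eq_smul_of_forall_eq_zero {E : Type*} [AddCommGroup E] [Module ℝ E]
    [TopologicalSpace E] {L M : E →L[ℝ] ℝ} (h : ∀ v, L v = 0 → M v = 0) :
    ∃ c : ℝ, M = c • L := by
  by_cases hL : L = 0
  · exact ⟨0, ContinuousLinearMap.ext fun v ↦ by simp [h v (by simp [hL])]⟩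
  obtain ⟨w, hw⟩ := surjective_of_ne_zero hL 1
  refine ⟨M w, ContinuousLinearMap.ext fun v ↦ ?_⟩
  have M_eq : M (v - L v • w) = 0 := h _ (by simp [hw])
  simpa [sub_eq_zero, mul_comm] using M_eq

lemma ker_subset_tangentConeAt_levelSet {E : Type*} [NormedAddCommGroup E] [NormedSpace ℝ E]
    [CompleteSpace E] {f : E → ℝ} {f' : E →L[ℝ] ℝ} {x : E} (hf : HasStrictFDerivAt f f' x)
    (hf' : f' ≠ 0) : {v | f' v = 0} ⊆ tangentConeAt ℝ {y | f y = f x} x := by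
  intro v hv
  have range_eq_top : f'.range = ⊤ :=
    LinearMap.range_eq_top.2 (surjective_of_ne_zero hf')
  set γ := hf.implicitFunction f f' range_eq_top (f x)
  have γ_zero : γ 0 = x := hf.implicitFunction_apply_image range_eq_top
  let w : f'.ker := ⟨v, hv⟩
  have line_tendsto : Tendsto (fun t : ℝ ↦ t • w) (𝓝[≠] 0) (𝓝 0) :=
    tendsto_nhdsWithin_of_tendsto_nhds (Continuous.tendsto' (by fun_prop) 0 0 (zero_smul ℝ w))
  have mem_levelSet : ∀ᶠ t : ℝ in 𝓝[≠] 0, f (γ (t • w)) = f x :=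
    ((tendsto_const_nhds (x := f x)).prodMk_nhds line_tendsto).eventually
      (hf.map_implicitFunction_eq range_eq_top)
  have hγ : HasDerivAt (fun t : ℝ ↦ γ (t • w)) v 0 := by
    have hγ0 : HasFDerivAt γ f'.ker.subtypeL 0 :=
      (hf.to_implicitFunction range_eq_top).hasFDerivAt
    simpa [HasLineDerivAt] using hγ0.hasLineDerivAt w
  refine mem_tangentConeAt_of_seq (𝓝[≠] (0 : ℝ)) (fun t ↦ t⁻¹) (fun t ↦ γ (t • w) - x) ?_ ?_ ?_
  · have γ_tendsto : Tendsto (fun t : ℝ ↦ γ (t • w)) (𝓝[≠] 0) (𝓝 x) := by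
      simpa [γ_zero] using hγ.continuousAt.tendsto.mono_left nhdsWithin_le_nhds
    exact tendsto_sub_nhds_zero_iff.2 γ_tendsto
  · filter_upwards [mem_levelSet] with t ht
    simpa using ht
  · have := hasDerivAt_iff_tendsto_slope.1 hγ
    simpa [slope_fun_def, γ_zero] using this

lemma starConvex_closure {E : Type*} [AddCommGroup E] [Module ℝ E] [TopologicalSpace E]
    [ContinuousAdd E] [ContinuousConstSMul ℝ E] {c : E} {s : Set E} (hs : StarConvex ℝ c s) :
    StarConvex ℝ c (closure s) := fun x hx a b ha hb hab ↦
  map_mem_closure (f := fun y ↦ a • c + b • y) (by fun_prop) hx fun y hy ↦ hs hy ha hb hab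

/-- `f` is a C¹ function defining the domain `Ω` as its sublevel set `{f < 0}` and regular on the
boundary, so that the derivative of `f` plays the role of an (unnormalised) outer conormal. -/
structure IsC1DefiningFunction {E : Type*} [NormedAddCommGroup E] [NormedSpace ℝ E]
    (f : E → ℝ) (Ω : Set E) : Prop where
  contDiff : ContDiff ℝ 1 f
  eq_sublevel : Ω = {x | f x < 0}
  fderiv_ne_zero : ∀ x ∈ frontier Ω, fderiv ℝ f x ≠ 0

namespace IsC1DefiningFunction

variable {E : Type*} [NormedAddCommGroup E] [NormedSpace ℝ E] {f : E → ℝ} {Ω : Set E} {x : E}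
  (hf : IsC1DefiningFunction f Ω)

include hf

lemma mem_iff : x ∈ Ω ↔ f x < 0 := by rw [hf.eq_sublevel, mem_ofPred_eq]

lemma isOpen : IsOpen Ω := by
  rw [hf.eq_sublevel]
  exact isOpen_lt hf.contDiff.continuous continuous_const

lemma hasStrictFDerivAt : HasStrictFDerivAt f (fderiv ℝ f x) x :=
  hf.contDiff.contDiffAt.hasStrictFDerivAt one_ne_zero

lemma hasFDerivAt : HasFDerivAt f (fderiv ℝ f x) x := hf.hasStrictFDerivAt.hasFDerivAt

lemma continuous_fderiv : Continuous (fderiv ℝ f) := hf.contDiff.continuous_fderiv one_ne_zero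

lemma eq_zero_of_mem_frontier (hx : x ∈ frontier Ω) : f x = 0 := by
  rw [hf.eq_sublevel] at hx
  exact frontier_lt_subset_eq hf.contDiff.continuous continuous_const hx

lemma nonpos_of_mem_closure (hx : x ∈ closure Ω) : f x ≤ 0 := by
  rw [hf.eq_sublevel] at hx
  exact closure_lt_subset_le hf.contDiff.continuous continuous_const hx

lemma mem_frontier_of_eq_zero (hx : f x = 0) (hx' : fderiv ℝ f x ≠ 0) : x ∈ frontier Ω := by
  have hxΩ : x ∉ Ω := fun h ↦ (hf.mem_iff.1 h).ne hx
  refine hf.isOpen.frontier_eq ▸ ⟨by_contra fun hxc ↦ hx' ?_, hxΩ⟩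
  have isLocalMin : IsLocalMin f x := by
    filter_upwards [isClosed_closure.isOpen_compl.mem_nhds hxc] with y hy
    rw [hx]
    exact not_lt.1 fun h ↦ hy (subset_closure (hf.mem_iff.2 h))
  exact isLocalMin.fderiv_eq_zero

lemma uniqueDiffOn_closure : UniqueDiffOn ℝ (closure Ω) := by
  intro x hx
  rcases (closure_eq_self_union_frontier Ω ▸ hx : x ∈ Ω ∪ frontier Ω) with hxΩ | hxf
  · exact (hf.isOpen.uniqueDiffWithinAt hxΩ).mono subset_closure
  have halfSpace_subset : {v | fderiv ℝ f x v < 0} ⊆ tangentConeAt ℝ (closure Ω) x := fun v hv ↦ by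
    refine mem_tangentConeAt_of_add_smul_mem (l := 𝓝[>] (0 : ℝ)) (c := id) (nhdsGT_le_nhdsNE 0) ?_
    filter_upwards [eventually_lt_of_fderiv_neg hf.hasFDerivAt hv] with t ht
    exact subset_closure (hf.mem_iff.2 (ht.trans_eq (hf.eq_zero_of_mem_frontier hxf)))
  obtain ⟨v, hv⟩ : ∃ v, fderiv ℝ f x v < 0 :=
    (surjective_of_ne_zero (hf.fderiv_ne_zero x hxf) (-1)).imp
      fun v hv ↦ hv.trans_lt neg_one_lt_zero
  have span_eq_top : Submodule.span ℝ (tangentConeAt ℝ (closure Ω) x) = ⊤ :=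
    Submodule.eq_top_of_nonempty_interior' _ ⟨v, interior_maximal
      (halfSpace_subset.trans Submodule.subset_span)
      (isOpen_lt (fderiv ℝ f x).continuous continuous_const) hv⟩
  exact ⟨span_eq_top ▸ dense_univ, subset_closure hx⟩

lemma fderiv_sub_nonneg {c : E} (hc : StarConvex ℝ c Ω) (hx : x ∈ frontier Ω) :
    0 ≤ fderiv ℝ f x (x - c) := by
  have hxc : x ∈ closure Ω := frontier_subset_closure hx
  have isMaxOn : IsMaxOn f (closure Ω) x := fun y hy ↦
    (hf.nonpos_of_mem_closure hy).trans_eq (hf.eq_zero_of_mem_frontier hx).symm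
  have segment_subset : segment ℝ x c ⊆ closure Ω :=
    segment_symm ℝ x c ▸ (starConvex_closure hc).segment_subset hxc
  have := isMaxOn.localize.hasFDerivWithinAt_nonpos hf.hasFDerivAt.hasFDerivWithinAt
    (sub_mem_posTangentConeAt_of_segment_subset segment_subset)
  rwa [← neg_sub, map_neg, neg_nonpos] at this

lemma exists_fderivWithin_eq_smul [CompleteSpace E] {u : E → ℝ}
    (hu : DifferentiableOn ℝ u (closure Ω)) (hbc : ∀ y ∈ frontier Ω, u y = 0)
    (hx : x ∈ frontier Ω) : ∃ l : ℝ, fderivWithin ℝ u (closure Ω) x = l • fderiv ℝ f x := by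
  refine exists_eq_smul_of_forall_eq_zero fun v hv ↦ ?_
  have eventually_frontier : 𝓝[{y | f y = f x}] x ≤ 𝓝[frontier Ω] x := by
    have fderiv_ne_zero := hf.continuous_fderiv.continuousAt.eventually_ne (hf.fderiv_ne_zero x hx)
    refine nhdsWithin_le_iff.2 ?_
    filter_upwards [self_mem_nhdsWithin, nhdsWithin_le_nhds fderiv_ne_zero] with y hy hy'
    exact hf.mem_frontier_of_eq_zero (hy.trans (hf.eq_zero_of_mem_frontier hx)) hy'
  have mem_tangentCone : v ∈ tangentConeAt ℝ (frontier Ω) x :=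
    tangentConeAt_mono_nhds eventually_frontier
      (ker_subset_tangentConeAt_levelSet hf.hasStrictFDerivAt (hf.fderiv_ne_zero x hx) hv)
  have hasFDerivWithinAt_zero : HasFDerivWithinAt u 0 (frontier Ω) x :=
    (hasFDerivWithinAt_zero (𝕜 := ℝ) x _).congr hbc (hbc x hx)
  exact ((hu x (frontier_subset_closure hx)).hasFDerivWithinAt.mono
    frontier_subset_closure).unique_on hasFDerivWithinAt_zero mem_tangentCone

lemma exists_contDiff_transversal [FiniteDimensional ℝ E] :
    ∃ V : E → E, ContDiff ℝ 1 V ∧ ∀ x ∈ frontier Ω, 0 < fderiv ℝ f x (V x) := by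
  have convex_halfSpace (y : E) : Convex ℝ {v | y ∈ frontier Ω → 0 < fderiv ℝ f y v} := by
    by_cases hy : y ∈ frontier Ω
    · simpa only [hy, forall_const] using!
        convex_halfSpace_gt (fderiv ℝ f y).toLinearMap.isLinear 0
    · simpa [hy] using convex_univ
  have locally_const (y : E) :
      ∃ v, ∀ᶠ z in 𝓝 y, v ∈ {v | z ∈ frontier Ω → 0 < fderiv ℝ f z v} := by
    by_cases hy : y ∈ frontier Ω
    · obtain ⟨v, hv⟩ : ∃ v, 0 < fderiv ℝ f y v :=
        (surjective_of_ne_zero (hf.fderiv_ne_zero y hy) 1).imp fun v hv ↦ one_pos.trans_eq hv.symm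
      have := (hf.continuous_fderiv.clm_apply continuous_const).continuousAt.eventually_const_lt hv
      exact ⟨v, this.mono fun z hz _ ↦ hz⟩
    · exact ⟨0, mem_of_superset (isClosed_frontier.isOpen_compl.mem_nhds hy)
        fun z hz hz' ↦ absurd hz' hz⟩
  obtain ⟨V, hV⟩ := exists_contMDiffMap_forall_mem_convex_of_local_const (n := 1)
    (modelWithCornersSelf ℝ E) convex_halfSpace locally_const
  exact ⟨V, V.contMDiff.contDiff, hV⟩

end IsC1DefiningFunction

/-! ## The divergence theorem as an inequality -/

section Cutoff

variable {X : Type*} {f : X → ℝ} {n : ℕ} {x : X}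

/-- A cutoff for the sublevel set `{f < 0}`: it vanishes where `-1 ≤ n * f`, equals `1` where
`n * f ≤ -2`, and converges to the indicator of `{f < 0}` as `n → ∞`. -/
def sublevelCutoff (f : X → ℝ) (n : ℕ) (x : X) : ℝ := Real.smoothTransition (-(n * f x) - 1)

lemma norm_sublevelCutoff_le_one : ‖sublevelCutoff f n x‖ ≤ 1 := by
  rw [sublevelCutoff, Real.norm_of_nonneg (Real.smoothTransition.nonneg _)]
  exact Real.smoothTransition.le_one _

lemma sublevelCutoff_eq_one (hx : n * f x ≤ -2) : sublevelCutoff f n x = 1 :=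
  Real.smoothTransition.one_of_one_le (by linarith)

lemma eventually_natCast_mul_lt {a : ℝ} (ha : a < 0) (c : ℝ) : ∀ᶠ n : ℕ in atTop, n * a < c :=
  (tendsto_natCast_atTop_atTop.atTop_mul_const_of_neg ha).eventually_lt_atBot c

lemma eventually_sublevelCutoff_eq_one (hx : f x < 0) :
    ∀ᶠ n : ℕ in atTop, sublevelCutoff f n x = 1 :=
  (eventually_natCast_mul_lt hx (-2)).mono fun _ hn ↦ sublevelCutoff_eq_one hn.le

variable [TopologicalSpace X]

lemma integrableOn_sublevelCutoff_mul [MeasurableSpace X] [OpensMeasurableSpace X]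
    {μ : Measure X} (hf : Continuous f) {D : X → ℝ} {Ω : Set X}
    (hD : IntegrableOn D Ω μ) : IntegrableOn (fun x ↦ sublevelCutoff f n x * D x) Ω μ :=
  hD.bdd_mul (c := 1) (Real.smoothTransition.continuous.comp (by fun_prop)).aestronglyMeasurable
    (ae_of_all _ fun _ ↦ norm_sublevelCutoff_le_one)

lemma tsupport_sublevelCutoff_subset (hf : Continuous f) :
    tsupport (sublevelCutoff f n) ⊆ {x | f x < 0} := by
  have tsupport_subset : tsupport (sublevelCutoff f n) ⊆ {x | n * f x ≤ -1} := by
    refine closure_minimal (fun x hx ↦ ?_) (isClosed_le (by fun_prop) continuous_const)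
    by_contra h
    have lt_mul : -1 < n * f x := not_le.1 h
    exact hx (Real.smoothTransition.zero_of_nonpos (by linarith))
  intro x hx
  have mul_le : n * f x ≤ -1 := tsupport_subset hx
  by_contra h
  linarith [mul_nonneg (n.cast_nonneg : (0 : ℝ) ≤ n) (not_lt.1 h)]

variable {E : Type*} [NormedAddCommGroup E] [NormedSpace ℝ E] {f : E → ℝ} {x : E}

lemma contDiff_sublevelCutoff {k : ℕ∞} (hf : ContDiff ℝ k f) : ContDiff ℝ k (sublevelCutoff f n) :=
  Real.smoothTransition.contDiff.comp (by fun_prop)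

lemma fderiv_sublevelCutoff (hf : DifferentiableAt ℝ f x) :
    fderiv ℝ (sublevelCutoff f n) x =
      (-(n * deriv Real.smoothTransition (-(n * f x) - 1))) • fderiv ℝ f x := by
  have outer : HasDerivAt Real.smoothTransition _ (-(n * f x) - 1) :=
    (Real.smoothTransition.contDiffAt.differentiableAt one_ne_zero).hasDerivAt
  have inner : HasFDerivAt (fun y ↦ -(n * f y) - 1) (-((n : ℝ) • fderiv ℝ f x)) x :=
    ((hf.hasFDerivAt.const_mul (n : ℝ)).neg).sub_const 1
  have hasFDerivAt : HasFDerivAt (sublevelCutoff f n) _ x := outer.comp_hasFDerivAt x inner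
  rw [hasFDerivAt.fderiv]
  module

lemma fderiv_sublevelCutoff_apply_nonpos (hf : DifferentiableAt ℝ f x) {v : E}
    (hv : 0 ≤ fderiv ℝ f x v) : fderiv ℝ (sublevelCutoff f n) x v ≤ 0 := by
  rw [fderiv_sublevelCutoff hf, smul_apply, smul_eq_mul, neg_mul, neg_nonpos]
  have : 0 ≤ deriv Real.smoothTransition (-(n * f x) - 1) :=
    Real.smoothTransition.monotone.deriv_nonneg
  positivity

lemma fderiv_sublevelCutoff_eq_zero (hf : ContinuousAt f x) (hx : n * f x < -2) :
    fderiv ℝ (sublevelCutoff f n) x = 0 := by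
  have eventually_one : sublevelCutoff f n =ᶠ[𝓝 x] fun _ ↦ 1 := by
    filter_upwards [(continuousAt_const.mul hf).eventually_lt_const hx] with y hy
    exact sublevelCutoff_eq_one hy.le
  rw [eventually_one.fderiv_eq, fderiv_fun_const]; rfl

end Cutoff

namespace IsC1DefiningFunction

variable {E : Type*} [NormedAddCommGroup E] [NormedSpace ℝ E] {f : E → ℝ} {Ω : Set E}

lemma exists_pos_of_pos_on_frontier [ProperSpace E] (hf : IsC1DefiningFunction f Ω)
    (hΩb : IsBounded Ω) {B : E → ℝ} (hB : ContinuousOn B (closure Ω))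
    (hpos : ∀ x ∈ frontier Ω, 0 < B x) :
    ∃ ε > 0, ∀ x ∈ Ω, -ε < f x → 0 < B x := by
  set K := closure Ω ∩ B ⁻¹' Iic 0
  have K_compact : IsCompact K := hΩb.isCompact_closure.of_isClosed_subset
    (hB.preimage_isClosed_of_isClosed isClosed_closure isClosed_Iic) inter_subset_left
  have K_neg : ∀ x ∈ K, f x < 0 := fun x hx ↦ hf.mem_iff.1 <|
    (closure_eq_self_union_frontier Ω ▸ hx.1 : x ∈ Ω ∪ frontier Ω).resolve_right
      fun hxf ↦ (hpos x hxf).not_ge hx.2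
  obtain ⟨δ, hδ, hKδ⟩ : ∃ δ < 0, ∀ x ∈ K, f x ≤ δ := by
    rcases K.eq_empty_or_nonempty with hK | hK
    · exact ⟨-1, by norm_num, by simp [hK]⟩
    · obtain ⟨y, hy, hmax⟩ := K_compact.exists_isMaxOn hK hf.contDiff.continuous.continuousOn
      exact ⟨f y, K_neg y hy, hmax⟩
  refine ⟨-δ, neg_pos.2 hδ, fun x hx hxδ ↦ ?_⟩
  by_contra! hBx
  exact (hKδ x ⟨subset_closure hx, hBx⟩).not_gt (by rwa [neg_neg] at hxδ)

variable [MeasurableSpace E] [BorelSpace E] {μ : Measure E}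

lemma tendsto_setIntegral_sublevelCutoff_mul (hf : IsC1DefiningFunction f Ω) {D : E → ℝ}
    (hD : IntegrableOn D Ω μ) :
    Tendsto (fun n ↦ ∫ x in Ω, sublevelCutoff f n x * D x ∂μ) atTop (𝓝 (∫ x in Ω, D x ∂μ)) := by
  refine tendsto_integral_of_dominated_convergence (fun x ↦ ‖D x‖)
    (fun _ ↦ (integrableOn_sublevelCutoff_mul hf.contDiff.continuous hD).1) hD.norm
    (fun n ↦ ae_of_all _ fun x ↦ ?_) ?_
  · rw [norm_mul]
    exact mul_le_of_le_one_left (norm_nonneg _) norm_sublevelCutoff_le_one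
  · refine (ae_restrict_iff' hf.isOpen.measurableSet).2 (ae_of_all _ fun x hx ↦ ?_)
    refine tendsto_const_nhds.congr' ?_
    filter_upwards [eventually_sublevelCutoff_eq_one (hf.mem_iff.1 hx)] with n hn
    rw [hn, one_mul]

variable [FiniteDimensional ℝ E] [μ.IsAddHaarMeasure] {W : E → E}

/-- Testing the divergence against a cutoff `η` gives `∫ η div W = -∫ dη(W)`, and `dη` is a
nonpositive multiple of `df` supported near the boundary, where `df(W) > 0`. -/
lemma setIntegral_divergence_nonneg_of_pos (hf : IsC1DefiningFunction f Ω) (hΩb : IsBounded Ω)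
    (hWc : ContinuousOn W (closure Ω)) (hW : ContDiffOn ℝ 1 W Ω)
    (hint : IntegrableOn (divergence W) Ω μ) (hpos : ∀ x ∈ frontier Ω, 0 < fderiv ℝ f x (W x)) :
    0 ≤ ∫ x in Ω, divergence W x ∂μ := by
  obtain ⟨ε, hε, hflux⟩ := hf.exists_pos_of_pos_on_frontier hΩb
    (hf.continuous_fderiv.continuousOn.clm_apply hWc) hpos
  have integral_nonneg : ∀ᶠ n : ℕ in atTop,
      0 ≤ ∫ x in Ω, sublevelCutoff f n x * divergence W x ∂μ := by
    filter_upwards [eventually_natCast_mul_lt (neg_neg_of_pos hε) (-2)] with n hn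
    rw [setIntegral_mul_divergence hf.isOpen hΩb (contDiff_sublevelCutoff hf.contDiff)
      ((tsupport_sublevelCutoff_subset hf.contDiff.continuous).trans_eq hf.eq_sublevel.symm) hW
      (integrableOn_sublevelCutoff_mul hf.contDiff.continuous hint), neg_nonneg]
    refine setIntegral_nonpos hf.isOpen.measurableSet fun x hx ↦ ?_
    rcases lt_or_ge (-ε) (f x) with near | far
    · exact fderiv_sublevelCutoff_apply_nonpos hf.hasFDerivAt.differentiableAt (hflux x hx near).le
    · have mul_lt : n * f x < -2 := (mul_le_mul_of_nonneg_left far n.cast_nonneg).trans_lt hn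
      rw [fderiv_sublevelCutoff_eq_zero hf.contDiff.continuous.continuousAt mul_lt, zero_apply]
  exact ge_of_tendsto (hf.tendsto_setIntegral_sublevelCutoff_mul hint) integral_nonneg

/-- The flux condition is made strict by adding to `W` a small multiple of a transversal field. -/
theorem setIntegral_divergence_nonneg (hf : IsC1DefiningFunction f Ω) (hΩb : IsBounded Ω)
    (hWc : ContinuousOn W (closure Ω)) (hW : ContDiffOn ℝ 1 W Ω)
    (hint : IntegrableOn (divergence W) Ω μ) (hflux : ∀ x ∈ frontier Ω, 0 ≤ fderiv ℝ f x (W x)) :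
    0 ≤ ∫ x in Ω, divergence W x ∂μ := by
  obtain ⟨V, hV, hVpos⟩ := hf.exists_contDiff_transversal
  have integrable_V : IntegrableOn (divergence V) Ω μ :=
    ((continuous_divergence hV).continuousOn.integrableOn_compact
      hΩb.isCompact_closure).mono_set subset_closure
  have perturbed_nonneg : ∀ δ > 0,
      0 ≤ (∫ x in Ω, divergence W x ∂μ) + δ * ∫ x in Ω, divergence V x ∂μ := by
    intro δ hδ
    have divergence_eq : EqOn (divergence (W + δ • V))
        (fun x ↦ divergence W x + δ * divergence V x) Ω := fun x hx ↦ by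
      have hVx : DifferentiableAt ℝ V x := hV.differentiable one_ne_zero x
      have hWx : DifferentiableAt ℝ W x :=
        (hW.contDiffAt (hf.isOpen.mem_nhds hx)).differentiableAt one_ne_zero
      rw [divergence_add hWx (hVx.const_smul δ), divergence_const_smul δ hVx]
    have integrable_sum := hint.add (integrable_V.const_mul δ)
    rw [← integral_const_mul, ← integral_add hint (integrable_V.const_mul δ),
      ← setIntegral_congr_fun hf.isOpen.measurableSet divergence_eq]
    refine hf.setIntegral_divergence_nonneg_of_pos hΩb
      (hWc.add (hV.continuous.const_smul δ).continuousOn)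
      (hW.add (hV.const_smul δ).contDiffOn)
      (integrable_sum.congr_fun divergence_eq.symm hf.isOpen.measurableSet) fun x hx ↦ ?_
    have := mul_pos hδ (hVpos x hx)
    simpa using add_pos_of_nonneg_of_pos (hflux x hx) this
  have perturbed_tendsto : Tendsto
      (fun δ ↦ (∫ x in Ω, divergence W x ∂μ) + δ * ∫ x in Ω, divergence V x ∂μ) (𝓝[>] 0)
      (𝓝 (∫ x in Ω, divergence W x ∂μ)) :=
    (Continuous.tendsto' (by fun_prop) _ _ (by simp)).mono_left nhdsWithin_le_nhds
  exact ge_of_tendsto perturbed_tendsto (eventually_nhdsWithin_of_forall perturbed_nonneg)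

end IsC1DefiningFunction

/-! ## Gradient and Laplacian -/

section Gradient

variable {E : Type*} [NormedAddCommGroup E] [InnerProductSpace ℝ E]

lemma contDiffOn_gradientWithin [CompleteSpace E] {u : E → ℝ} {s : Set E} {m n : ℕ∞ω}
    (hu : ContDiffOn ℝ n u s) (hs : UniqueDiffOn ℝ s) (hmn : m + 1 ≤ n) :
    ContDiffOn ℝ m (gradientWithin u s) s :=
  ((toDual ℝ E).symm : StrongDual ℝ E ≃ₗᵢ[ℝ] E).contDiff.comp_contDiffOn (hu.fderivWithin hs hmn)

lemma gradientWithin_of_mem_nhds [CompleteSpace E] {u : E → ℝ} {s : Set E} {x : E}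
    (hs : s ∈ 𝓝 x) : gradientWithin u s x = ∇ u x := by
  rw [gradientWithin, fderivWithin_of_mem_nhds hs, gradient]

lemma differentiableAt_gradient [CompleteSpace E] {u : E → ℝ} {x : E}
    (hu : DifferentiableAt ℝ (fderiv ℝ u) x) : DifferentiableAt ℝ (∇ u) x :=
  ((toDual ℝ E).symm : StrongDual ℝ E ≃ₗᵢ[ℝ] E).differentiable.differentiableAt.comp x hu

lemma differentiableAt_fderiv {u : E → ℝ} {x : E} (hu : ContDiffAt ℝ 2 u x) :
    DifferentiableAt ℝ (fderiv ℝ u) x :=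
  (hu.fderiv_right (m := 1) le_rfl).differentiableAt one_ne_zero

lemma inner_fderiv_gradient [CompleteSpace E] {u : E → ℝ} {x : E}
    (hu : DifferentiableAt ℝ (fderiv ℝ u) x) (v w : E) :
    ⟪fderiv ℝ (∇ u) x v, w⟫_ℝ = fderiv ℝ (fderiv ℝ u) x v w := by
  have fderiv_inner : fderiv ℝ (fun y ↦ ⟪∇ u y, w⟫_ℝ) x v = ⟪fderiv ℝ (∇ u) x v, w⟫_ℝ := by
    rw [fderiv_inner_apply ℝ (differentiableAt_gradient hu) (differentiableAt_const w),
      fderiv_fun_const, Pi.zero_apply, zero_apply, inner_zero_right, zero_add]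
  simp only [inner_gradient_left, fderiv_clm_apply hu (differentiableAt_const w)] at fderiv_inner
  simpa using fderiv_inner.symm

lemma isSymmetric_fderiv_gradient [CompleteSpace E] {u : E → ℝ} {x : E}
    (hu : ContDiffAt ℝ 2 u x) : (fderiv ℝ (∇ u) x : E →ₗ[ℝ] E).IsSymmetric := by
  have hu' := differentiableAt_fderiv hu
  have symm_snd : IsSymmSndFDerivAt ℝ u x := hu.isSymmSndFDerivAt (by simp)
  exact fun v w ↦ calc
    ⟪fderiv ℝ (∇ u) x v, w⟫_ℝ = fderiv ℝ (fderiv ℝ u) x v w := inner_fderiv_gradient hu' v w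
    _ = fderiv ℝ (fderiv ℝ u) x w v := symm_snd v w
    _ = ⟪v, fderiv ℝ (∇ u) x w⟫_ℝ := by rw [← inner_fderiv_gradient hu' w v, real_inner_comm]

variable [FiniteDimensional ℝ E]

lemma laplacian_eq_sum_fderiv_fderiv {ι : Type*} [Fintype ι] (b : OrthonormalBasis ι ℝ E)
    (u : E → ℝ) (x : E) : Δ u x = ∑ i, fderiv ℝ (fderiv ℝ u) x (b i) (b i) := by
  simp only [laplacian_eq_iteratedFDeriv_orthonormalBasis u b, iteratedFDeriv_two_apply,
    Matrix.cons_val_zero, Matrix.cons_val_one]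

lemma divergence_gradient {u : E → ℝ} {x : E} (hu : DifferentiableAt ℝ (fderiv ℝ u) x) :
    divergence (∇ u) x = Δ u x := by
  rw [divergence, LinearMap.trace_eq_sum_inner _ (stdOrthonormalBasis ℝ E),
    laplacian_eq_sum_fderiv_fderiv (stdOrthonormalBasis ℝ E)]
  refine Finset.sum_congr rfl fun i _ ↦ ?_
  rw [real_inner_comm]
  exact inner_fderiv_gradient hu _ _

lemma laplacian_euclideanSpace {ι : Type*} [Fintype ι] [DecidableEq ι]
    {u : EuclideanSpace ℝ ι → ℝ}
    {x : EuclideanSpace ℝ ι} (hu : ContDiffAt ℝ 2 u x) :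
    Δ u x = ∑ i, fderiv ℝ (fun y ↦ fderiv ℝ u y (EuclideanSpace.single i 1)) x
      (EuclideanSpace.single i 1) := by
  rw [laplacian_eq_sum_fderiv_fderiv (EuclideanSpace.basisFun ι ℝ)]
  refine Finset.sum_congr rfl fun i _ ↦ ?_
  rw [EuclideanSpace.basisFun_apply, fderiv_clm_apply
    (differentiableAt_fderiv hu) (differentiableAt_const _)]
  simp

end Gradient

/-! ## The Pohozaev field -/

section Pohozaev

variable {E : Type*} [NormedAddCommGroup E] [InnerProductSpace ℝ E]
  {G : ℝ → ℝ} {u : E → ℝ} {p : E → E} {x : E}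

/-- The Pohozaev field of `u` with gradient `p` and energy density `‖p‖² / 2 - G u`: the Noether
current of the dilation `u ↦ t ^ ((d - 2) / 2) • u (t • ·)`, where `d` is the dimension. -/
def pohozaevField (G : ℝ → ℝ) (u : E → ℝ) (p : E → E) : E → E :=
  (fun x ↦ ⟪x, p x⟫_ℝ + (finrank ℝ E - 2) / 2 * u x) • p + (fun x ↦ G (u x) - ‖p x‖ ^ 2 / 2) • id

lemma contDiffOn_pohozaevField {s : Set E} {n : ℕ∞ω} (hG : ContDiff ℝ n G)
    (hu : ContDiffOn ℝ n u s) (hp : ContDiffOn ℝ n p s) :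
    ContDiffOn ℝ n (pohozaevField G u p) s :=
  (((contDiffOn_id.inner ℝ hp).add (contDiffOn_const.mul hu)).smul hp).add
    (((hG.comp_contDiffOn hu).sub ((hp.norm_sq ℝ).div_const 2)).smul contDiffOn_id)

lemma divergence_pohozaevField [FiniteDimensional ℝ E] {g : ℝ} (hu : HasGradientAt u (p x) x)
    (hp : DifferentiableAt ℝ p x) (hsymm : (fderiv ℝ p x : E →ₗ[ℝ] E).IsSymmetric)
    (hdiv : -divergence p x = g) (hG : HasDerivAt G g (u x)) :
    divergence (pohozaevField G u p) x =
      finrank ℝ E * G (u x) - (finrank ℝ E - 2) / 2 * (u x * g) := by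
  have multiplier : HasFDerivAt (fun y ↦ ⟪y, p y⟫_ℝ + (finrank ℝ E - 2) / 2 * u y) _ x :=
    ((hasFDerivAt_id x).inner ℝ hp.hasFDerivAt).add
      (hu.hasFDerivAt.const_mul ((finrank ℝ E - 2) / 2 : ℝ))
  have lagrangian : HasFDerivAt (fun y ↦ G (u y) - ‖p y‖ ^ 2 / 2) _ x :=
    (hG.comp_hasFDerivAt x hu.hasFDerivAt).sub (hp.hasFDerivAt.norm_sq.mul_const 2⁻¹)
  have symm : ⟪fderiv ℝ p x (p x), x⟫_ℝ = ⟪p x, fderiv ℝ p x x⟫_ℝ := hsymm (p x) x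
  rw [pohozaevField, divergence_add (multiplier.differentiableAt.smul hp)
    (lagrangian.differentiableAt.smul differentiableAt_id),
    divergence_smul multiplier.differentiableAt hp,
    divergence_smul lagrangian.differentiableAt differentiableAt_id, divergence_id,
    multiplier.fderiv, lagrangian.fderiv, neg_eq_iff_eq_neg.1 hdiv]
  simp only [add_apply, sub_apply, smul_apply, smul_eq_mul, nsmul_eq_mul, id_eq,
    ContinuousLinearMap.comp_apply, ContinuousLinearMap.prod_apply, ContinuousLinearMap.id_apply,
    fderivInnerCLM_apply, coe_innerSL_apply, toDual_apply_apply, real_inner_self_eq_norm_sq,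
    real_inner_comm, ← symm]
  ring

end Pohozaev

lemma eqOn_zero_of_setIntegral_nonneg {X : Type*} [TopologicalSpace X] [MeasurableSpace X]
    [OpensMeasurableSpace X] {μ : Measure X} [μ.IsOpenPosMeasure] {Ω : Set X} (hΩ : IsOpen Ω)
    {h : X → ℝ} (hc : ContinuousOn h Ω) (hint : IntegrableOn h Ω μ) (hle : ∀ x ∈ Ω, h x ≤ 0)
    (hnonneg : 0 ≤ ∫ x in Ω, h x ∂μ) : EqOn h 0 Ω := by
  have neg_nonneg : 0 ≤ᵐ[μ.restrict Ω] -h :=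
    (ae_restrict_iff' hΩ.measurableSet).2 (ae_of_all _ fun x hx ↦ neg_nonneg.2 (hle x hx))
  have integral_neg_eq_zero : ∫ x in Ω, (-h) x ∂μ = 0 := by
    rw [integral_neg', neg_eq_zero]
    exact (setIntegral_nonpos hΩ.measurableSet hle).antisymm hnonneg
  have ae_eq_zero : h =ᵐ[μ.restrict Ω] 0 := by
    filter_upwards [(integral_eq_zero_iff_of_nonneg_ae neg_nonneg hint.neg).1 integral_neg_eq_zero]
      with x hx using neg_eq_zero.1 hx
  exact Measure.eqOn_open_of_ae_eq ae_eq_zero hΩ hc continuousOn_const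

section Pohozaev

variable {E : Type*} [NormedAddCommGroup E] [InnerProductSpace ℝ E] [FiniteDimensional ℝ E]
  {f u : E → ℝ} {Ω : Set E} {G g : ℝ → ℝ}

lemma divergence_pohozaevField_gradientWithin {s : Set E} {x : E} {γ : ℝ} (hu : ContDiffAt ℝ 2 u x)
    (hs : s ∈ 𝓝 x) (heq : -Δ u x = γ) (hG : HasDerivAt G γ (u x)) :
    divergence (pohozaevField G u (gradientWithin u s)) x =
      finrank ℝ E * G (u x) - (finrank ℝ E - 2) / 2 * (u x * γ) := by
  have gradientWithin_eq : gradientWithin u s =ᶠ[𝓝 x] ∇ u :=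
    (eventually_mem_nhds_iff.2 hs).mono fun _ ↦ gradientWithin_of_mem_nhds
  have differentiable_fderiv := differentiableAt_fderiv hu
  refine divergence_pohozaevField ?_ ?_ ?_ ?_ hG
  · rw [gradientWithin_of_mem_nhds hs]
    exact (hu.differentiableAt two_ne_zero).hasGradientAt
  · exact gradientWithin_eq.differentiableAt_iff.2 (differentiableAt_gradient differentiable_fderiv)
  · rw [gradientWithin_eq.fderiv_eq]
    exact isSymmetric_fderiv_gradient hu
  · rw [divergence_congr gradientWithin_eq, divergence_gradient differentiable_fderiv, heq]

lemma fderiv_pohozaevField_nonneg (hf : IsC1DefiningFunction f Ω) (hΩ : StarConvex ℝ 0 Ω)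
    (hG : G 0 = 0) (hu : DifferentiableOn ℝ u (closure Ω)) (hbc : ∀ x ∈ frontier Ω, u x = 0) {x : E}
    (hx : x ∈ frontier Ω) :
    0 ≤ fderiv ℝ f x (pohozaevField G u (gradientWithin u (closure Ω)) x) := by
  obtain ⟨l, hl⟩ := hf.exists_fderivWithin_eq_smul hu hbc hx
  have gradient_eq : gradientWithin u (closure Ω) x = l • ∇ f x := by
    rw [gradientWithin, hl, map_smul, gradient]
  have outward : 0 ≤ fderiv ℝ f x x := by simpa using hf.fderiv_sub_nonneg hΩ hx
  have field_eq : fderiv ℝ f x (pohozaevField G u (gradientWithin u (closure Ω)) x) =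
      (l * ‖∇ f x‖) ^ 2 / 2 * fderiv ℝ f x x := by
    have norm_sq : fderiv ℝ f x (∇ f x) = ‖∇ f x‖ ^ 2 := by
      rw [← inner_gradient_left, real_inner_self_eq_norm_sq]
    have inner_eq : ⟪x, ∇ f x⟫_ℝ = fderiv ℝ f x x := by
      rw [real_inner_comm, inner_gradient_left]
    simp only [pohozaevField, Pi.add_apply, Pi.smul_apply', gradient_eq, hbc x hx, hG, id_eq,
      map_add, map_smul, smul_eq_mul, norm_sq, inner_smul_right, inner_eq, norm_smul,
      Real.norm_eq_abs, mul_pow, sq_abs]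
    ring
  rw [field_eq]
  positivity

/-- Pohozaev's identity with its boundary term `∫ ‖∇ u‖² ⟪x, ν⟫ / 2` dropped. -/
theorem setIntegral_pohozaev_nonneg [MeasurableSpace E] [BorelSpace E] {μ : Measure E}
    [μ.IsAddHaarMeasure] (hf : IsC1DefiningFunction f Ω)
    (hΩb : IsBounded Ω) (hΩ : StarConvex ℝ 0 Ω) (hG : ∀ s, HasDerivAt G (g s) s) (hG0 : G 0 = 0)
    (hg : Continuous g) (hu : ContDiffOn ℝ 2 u (closure Ω)) (heq : ∀ x ∈ Ω, -Δ u x = g (u x))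
    (hbc : ∀ x ∈ frontier Ω, u x = 0) :
    0 ≤ ∫ x in Ω, (finrank ℝ E * G (u x) - (finrank ℝ E - 2) / 2 * (u x * g (u x))) ∂μ := by
  have hG1 : ContDiff ℝ 1 G := contDiff_one_iff_deriv.2
    ⟨fun s ↦ (hG s).differentiableAt, by rwa [funext fun s ↦ (hG s).deriv]⟩
  have contDiffOn_field : ContDiffOn ℝ 1 (pohozaevField G u (gradientWithin u (closure Ω)))
      (closure Ω) := contDiffOn_pohozaevField hG1 (hu.of_le one_le_two)
    (contDiffOn_gradientWithin hu hf.uniqueDiffOn_closure one_add_one_eq_two.le)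
  have divergence_eq : EqOn (divergence (pohozaevField G u (gradientWithin u (closure Ω))))
      (fun x ↦ finrank ℝ E * G (u x) - (finrank ℝ E - 2) / 2 * (u x * g (u x))) Ω := by
    intro x hx
    have closure_mem : closure Ω ∈ 𝓝 x := mem_of_superset (hf.isOpen.mem_nhds hx) subset_closure
    exact divergence_pohozaevField_gradientWithin (hu.contDiffAt closure_mem) closure_mem
      (heq x hx) (hG _)
  have integrable : IntegrableOn
      (fun x ↦ finrank ℝ E * G (u x) - (finrank ℝ E - 2) / 2 * (u x * g (u x))) Ω μ := by
    have hu_cont := hu.continuousOn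
    have hG_cont := hG1.continuous
    exact (ContinuousOn.integrableOn_compact hΩb.isCompact_closure (by fun_prop)).mono_set
      subset_closure
  rw [← setIntegral_congr_fun hf.isOpen.measurableSet divergence_eq]
  exact hf.setIntegral_divergence_nonneg hΩb contDiffOn_field.continuousOn
    (contDiffOn_field.mono subset_closure)
    (integrable.congr_fun divergence_eq.symm hf.isOpen.measurableSet)
    fun x hx ↦ fderiv_pohozaevField_nonneg hf hΩ hG0 (hu.differentiableOn two_ne_zero) hbc hx

end Pohozaev

/-- For an odd power `g s = s ^ N` and dimension `d > 2`, the supercriticality condition `hcrit`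
reads `(d + 2) / (d - 2) < N`. -/
theorem pohozaev_trivial_solution_general {E : Type*} [NormedAddCommGroup E]
    [InnerProductSpace ℝ E] [FiniteDimensional ℝ E] {f : E → ℝ} {Ω : Set E}
    (hf : IsC1DefiningFunction f Ω) (hΩb : IsBounded Ω) (hΩ : StarConvex ℝ 0 Ω)
    {g : ℝ → ℝ} (hg : Continuous g)
    (hcrit : ∀ s ≠ 0, finrank ℝ E * ∫ t in 0..s, g t < (finrank ℝ E - 2) / 2 * (s * g s))
    {u : E → ℝ} (hu : ContDiffOn ℝ 2 u (closure Ω)) (heq : ∀ x ∈ Ω, -Δ u x = g (u x))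
    (hbc : ∀ x ∈ frontier Ω, u x = 0) : ∀ x ∈ closure Ω, u x = 0 := by
  borelize E
  have hG (s : ℝ) : HasDerivAt (fun s ↦ ∫ t in 0..s, g t) (g s) s :=
    (hg.integral_hasStrictDerivAt 0 s).hasDerivAt
  set h : ℝ → ℝ := fun s ↦ finrank ℝ E * (∫ t in 0..s, g t) - (finrank ℝ E - 2) / 2 * (s * g s)
  have h_neg {s : ℝ} (hs : s ≠ 0) : h s < 0 := sub_neg.2 (hcrit s hs)
  have h_nonpos (s : ℝ) : h s ≤ 0 := by
    rcases eq_or_ne s 0 with rfl | hs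
    · simp [h]
    · exact (h_neg hs).le
  have h_continuous : ContinuousOn (fun x ↦ h (u x)) (closure Ω) := by
    have hG_cont : Continuous fun s ↦ ∫ t in 0..s, g t :=
      continuous_iff_continuousAt.2 fun s ↦ (hG s).continuousAt
    have hh : Continuous h :=
      (continuous_const.mul hG_cont).sub (continuous_const.mul (continuous_id.mul hg))
    exact hh.comp_continuousOn hu.continuousOn
  have h_eq_zero : EqOn (fun x ↦ h (u x)) 0 Ω :=
    eqOn_zero_of_setIntegral_nonneg (μ := volume) hf.isOpen (h_continuous.mono subset_closure)
      ((h_continuous.integrableOn_compact hΩb.isCompact_closure).mono_set subset_closure)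
      (fun x _ ↦ h_nonpos (u x))
      (setIntegral_pohozaev_nonneg hf hΩb hΩ hG intervalIntegral.integral_same hg hu heq hbc)
  intro x hx
  rcases (closure_eq_self_union_frontier Ω ▸ hx : x ∈ Ω ∪ frontier Ω) with hxΩ | hxf
  · by_contra hux
    exact (h_neg hux).ne (h_eq_zero hxΩ)
  · exact hbc x hxf

/-! ## The tail of `sinh` -/

open scoped Nat

lemma mul_integral_le_mul_of_scaling {g : ℝ → ℝ} (hg : Continuous g) {n : ℕ} {s : ℝ}
    (hscal : ∀ t ∈ Icc (0 : ℝ) 1, s * g (t * s) ≤ t ^ n * (s * g s)) :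
    (n + 1) * ∫ t in 0..s, g t ≤ s * g s := by
  have integral_eq : ∫ t in 0..s, g t = ∫ t in 0..1, s * g (t * s) := by
    rw [intervalIntegral.integral_const_mul, intervalIntegral.mul_integral_comp_mul_right, zero_mul,
      one_mul]
  calc (n + 1) * ∫ t in 0..s, g t
      ≤ (n + 1) * ∫ t in 0..1, t ^ n * (s * g s) := by
        rw [integral_eq]
        gcongr
        exact intervalIntegral.integral_mono_on zero_le_one
          (Continuous.intervalIntegrable (by fun_prop) _ _)
          (Continuous.intervalIntegrable (by fun_prop) _ _) hscal
    _ = s * g s := by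
        rw [intervalIntegral.integral_mul_const, integral_pow, one_pow,
          zero_pow n.succ_ne_zero, sub_zero]
        field_simp

/-- The tail of the Taylor series of `sinh` that starts at degree `N₀`. -/
def sinhTail (N₀ : ℕ) (s : ℝ) : ℝ := ∑' N : ℕ, if Odd N ∧ N₀ ≤ N then s ^ N / N ! else 0

lemma norm_sinhTail_term_le (N₀ N : ℕ) {s R : ℝ} (hs : |s| ≤ R) :
    ‖if Odd N ∧ N₀ ≤ N then s ^ N / (N ! : ℝ) else 0‖ ≤ R ^ N / N ! := by
  have hR : 0 ≤ R := (abs_nonneg s).trans hs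
  split_ifs
  · rw [norm_div, norm_pow, Real.norm_eq_abs, Real.norm_natCast]
    gcongr
  · rw [norm_zero]
    positivity

lemma summable_sinhTail (N₀ : ℕ) (s : ℝ) :
    Summable fun N : ℕ ↦ if Odd N ∧ N₀ ≤ N then s ^ N / (N ! : ℝ) else 0 :=
  Summable.of_norm_bounded (Real.summable_pow_div_factorial |s|)
    fun N ↦ norm_sinhTail_term_le N₀ N le_rfl

lemma continuous_sinhTail (N₀ : ℕ) : Continuous (sinhTail N₀) := by
  refine continuous_iff_continuousAt.2 fun s ↦ ?_
  have continuousOn_ball : ContinuousOn (sinhTail N₀) (Metric.ball 0 (|s| + 1)) :=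
    continuousOn_tsum (fun N ↦ by split_ifs <;> fun_prop)
      (Real.summable_pow_div_factorial (|s| + 1))
      fun N y hy ↦ norm_sinhTail_term_le N₀ N (mem_ball_zero_iff.1 hy).le
  exact continuousOn_ball.continuousAt (Metric.isOpen_ball.mem_nhds (by simp))

lemma mul_sinhTail_term_nonneg (N₀ N : ℕ) (s : ℝ) :
    0 ≤ s * if Odd N ∧ N₀ ≤ N then s ^ N / (N ! : ℝ) else 0 := by
  split_ifs with hN
  · rw [← mul_div_assoc, ← pow_succ']
    exact div_nonneg (hN.1.add_one.pow_nonneg s) (Nat.cast_nonneg _)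
  · rw [mul_zero]

lemma mul_sinhTail_mul_le (N₀ : ℕ) (s : ℝ) {t : ℝ} (ht : t ∈ Icc (0 : ℝ) 1) :
    s * sinhTail N₀ (t * s) ≤ t ^ N₀ * (s * sinhTail N₀ s) := by
  simp only [sinhTail, ← tsum_mul_left]
  refine Summable.tsum_le_tsum (fun N ↦ ?_) ((summable_sinhTail N₀ (t * s)).mul_left s)
    (((summable_sinhTail N₀ s).mul_left s).mul_left (t ^ N₀))
  have := mul_sinhTail_term_nonneg N₀ N s
  split_ifs at this ⊢ with hN
  · calc s * ((t * s) ^ N / N !) = t ^ N * (s * (s ^ N / N !)) := by ring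
      _ ≤ t ^ N₀ * (s * (s ^ N / N !)) :=
        mul_le_mul_of_nonneg_right (pow_le_pow_of_le_one ht.1 ht.2 hN.2) this
  · simp

lemma mul_sinhTail_pos (N₀ : ℕ) {s : ℝ} (hs : s ≠ 0) : 0 < s * sinhTail N₀ s := by
  rw [sinhTail, ← tsum_mul_left]
  refine ((summable_sinhTail N₀ s).mul_left s).tsum_pos (mul_sinhTail_term_nonneg N₀ · s)
    (2 * N₀ + 1) ?_
  have odd_index : Odd (2 * N₀ + 1) := odd_two_mul_add_one N₀
  rw [if_pos ⟨odd_index, by lia⟩, ← mul_div_assoc, ← pow_succ']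
  exact div_pos (odd_index.add_one.pow_pos hs) (by positivity)

lemma mul_integral_sinhTail_lt {d : ℝ} (hd : 2 < d) {N₀ : ℕ}
    (hcrit : (d + 2) / (d - 2) < N₀) {s : ℝ} (hs : s ≠ 0) :
    d * ∫ t in 0..s, sinhTail N₀ t < (d - 2) / 2 * (s * sinhTail N₀ s) := by
  rw [div_lt_iff₀ (by linarith)] at hcrit
  have hN₀ : (0 : ℝ) < N₀ + 1 := by positivity
  refine lt_of_mul_lt_mul_left ?_ hN₀.le
  calc (N₀ + 1) * (d * ∫ t in 0..s, sinhTail N₀ t)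
      = d * ((N₀ + 1) * ∫ t in 0..s, sinhTail N₀ t) := by ring
    _ ≤ d * (s * sinhTail N₀ s) :=
        mul_le_mul_of_nonneg_left (mul_integral_le_mul_of_scaling (continuous_sinhTail N₀)
          fun t ht ↦ mul_sinhTail_mul_le N₀ s ht) (by linarith)
    _ < ((N₀ + 1) * ((d - 2) / 2)) * (s * sinhTail N₀ s) :=
        mul_lt_mul_of_pos_right (by linarith) (mul_sinhTail_pos N₀ hs)
    _ = (N₀ + 1) * ((d - 2) / 2 * (s * sinhTail N₀ s)) := by ring

end

/-- Derrick–Pohozaev uniqueness: let d ≥ 3, N₀ > (d+2)/(d-2) an odd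
integer, Ω star-shaped about 0 with C¹ boundary. Any classical solution
u ∈ C²(closure Ω) of  -Δu = ∑_{N ≥ N₀, N odd} u^N/N!  in Ω with u = 0 on ∂Ω vanishes
identically on closure Ω. -/
theorem pohozaev_trivial_solution
    (d : ℕ) (hd : 3 ≤ d) (N₀ : ℕ) (hodd : Odd N₀)
    (hcrit : ((d : ℝ) + 2) / ((d : ℝ) - 2) < (N₀ : ℝ))
    (Ω : Set (Euc d)) (hΩo : IsOpen Ω) (hΩb : Bornology.IsBounded Ω)
    (h0 : (0 : Euc d) ∈ Ω) (hstar : StarConvex ℝ (0 : Euc d) Ω)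
    (hC1 : HasC1Boundary Ω)
    (u : Euc d → ℝ) (hu : ContDiffOn ℝ 2 u (closure Ω))
    (heq : ∀ x ∈ Ω,
      -(∑ i : Fin d,
          fderiv ℝ (fun y => fderiv ℝ u y (EuclideanSpace.single i (1:ℝ))) x
            (EuclideanSpace.single i (1:ℝ)))
        = ∑' N : ℕ, if Odd N ∧ N₀ ≤ N then u x ^ N / (Nat.factorial N : ℝ) else 0)
    (hbc : ∀ x ∈ frontier Ω, u x = 0) :
    ∀ x ∈ closure Ω, u x = 0 := by
  obtain ⟨f, hf, hΩ, hf0⟩ := hC1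
  have two_lt : (2 : ℝ) < d := mod_cast hd
  have laplacian_eq (x) (hx : x ∈ Ω) : -Laplacian.laplacian u x = sinhTail N₀ (u x) := by
    have hux := hu.contDiffAt (mem_of_superset (hΩo.mem_nhds hx) subset_closure)
    rw [laplacian_euclideanSpace hux, heq x hx, sinhTail]
  exact pohozaev_trivial_solution_general ⟨hf, hΩ, hf0⟩ hΩb hstar (continuous_sinhTail N₀)
    (fun s hs ↦ by simpa using mul_integral_sinhTail_lt two_lt hcrit hs) hu laplacian_eq hbc
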